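/- arXiv:1609.08016 — 2 statements merged into one kernel-verified Lean document; each statement's English description precedes it below -/
import Mathlib

section
/- Fix an integer d ≥ 2, let a ∈ [1/2, 1] and b ∈ [0, 1−a]. Then the matrix ρ = (2a/(d(d−1)))·W₋ + (2b/(d(d−1)))·(W₊ − Q) + ((1−a−b)/d)·Q lies in the convex hull, taken in the real vector space of (d²)×(d²) complex matrices, of the Werner orbit orb_wer(ψ_a) = { |(U⊗U)ψ_a⟩⟨(U⊗U)ψ_a| : U a d×d unitary }. -/
open scoped BigOperators

/-!
The vector `ψ_a` is `α e_z ⊗ e_o - β e_o ⊗ e_z` with `α + β = √(2a)` and `α - β = √(2(1 - a))`.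
A unitary taking `e_z`, `e_o` to an orthonormal pair in the plane of `e_i` and `e_j`, with real
angle `(c, s)` and relative phase `u`, maps it to a vector whose components along `e_i ⊗ e_i`,
`span {e_i ⊗ e_j, e_j ⊗ e_i}` and `e_j ⊗ e_j` carry the phases `1`, `u` and `u²`. Averaging over
the cube roots of unity `u` removes the cross terms. The middle component
`p e_i ⊗ e_j + q e_j ⊗ e_i` has `p - q = α + β` and `p + q = (α - β)(c² - s²)`, so averaging over
all ordered pairs `i ≠ j` gives `W₋` the weight `|α + β|² = 2a` and `W₊ - Q` the weight
`2(1 - a)(c² - s²)²`. The angle is chosen to make the latter `2b`; the trace fixes the rest.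
-/

section WernerTwirl

open Matrix Finset
open scoped Kronecker

section RankOne

lemma inv_card_smul_sum_mem_of_convex {E κ : Type*} [AddCommGroup E] [Module ℝ E] {C : Set E}
    (hC : Convex ℝ C) {t : Finset κ} (ht : t.Nonempty) {f : κ → E} (hf : ∀ k ∈ t, f k ∈ C) :
    (#t : ℝ)⁻¹ • ∑ k ∈ t, f k ∈ C := by
  rw [smul_sum]
  exact hC.sum_mem (fun _ _ ↦ by positivity) (by simp [ht.ne_empty]) hf

variable {κ : Type*}

/-- The rank-one operator `|v⟩⟨v|`. -/
def ketBra (v : κ → ℂ) : Matrix κ κ ℂ :=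
  vecMulVec v (star v)

lemma ketBra_smul_add_smul (c d : ℂ) (v w : κ → ℂ) :
    ketBra (c • v + d • w) = ‖c‖ ^ 2 • ketBra v + ‖d‖ ^ 2 • ketBra w
      + (c * star d) • vecMulVec v (star w) + (d * star c) • vecMulVec w (star v) := by
  ext i j
  simp only [ketBra, vecMulVec_apply, Matrix.add_apply, Matrix.smul_apply, Pi.add_apply,
    Pi.smul_apply, Pi.star_apply, star_add, star_mul', smul_eq_mul, Complex.real_smul,
    Complex.star_def, Complex.ofReal_pow, ← Complex.mul_conj']
  ring

lemma ketBra_smul (c : ℂ) (v : κ → ℂ) : ketBra (c • v) = ‖c‖ ^ 2 • ketBra v := by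
  simpa using ketBra_smul_add_smul c 0 v 0

lemma sum_ketBra_addChar {R : Type*} [CommRing R] [Fintype R] {χ : AddChar R ℂ}
    (hχ : χ.IsPrimitive) (x : R → κ → ℂ) :
    ∑ k, ketBra (∑ m, χ (k * m) • x m) = (Fintype.card R : ℝ) • ∑ m, ketBra (x m) := by
  classical
  have orthogonality (m n : R) :
      ∑ k, χ (k * m) * star (χ (k * n)) = if m = n then (Fintype.card R : ℂ) else 0 := by
    simp only [Complex.star_def, ← χ.map_neg_eq_conj, ← χ.map_add_eq_mul, ← sub_eq_add_neg,
      ← mul_sub, AddChar.sum_mulShift _ hχ, sub_eq_zero, Nat.cast_ite, Nat.cast_zero]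
  ext p q
  calc (∑ k, ketBra (∑ m, χ (k * m) • x m)) p q
      = ∑ k, ∑ m, ∑ n, χ (k * m) * star (χ (k * n)) * (x m p * star (x n q)) := by
        simp only [Matrix.sum_apply, ketBra, vecMulVec_apply, Pi.star_apply, Finset.sum_apply,
          Pi.smul_apply, smul_eq_mul, star_sum, star_mul', sum_mul_sum, mul_mul_mul_comm]
    _ = ∑ m, ∑ n, (∑ k, χ (k * m) * star (χ (k * n))) * (x m p * star (x n q)) := by
        rw [sum_comm]
        simp only [sum_comm (s := univ (α := R)) (f := fun k _ ↦ χ (k * _) * _ * _), sum_mul]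
    _ = ∑ m, (Fintype.card R : ℂ) * (x m p * star (x m q)) := by
        simp only [orthogonality, ite_mul, zero_mul, sum_ite_eq, mem_univ, if_true]
    _ = ((Fintype.card R : ℝ) • ∑ m, ketBra (x m)) p q := by
        simp [ketBra, vecMulVec_apply, Matrix.sum_apply, mul_sum]

lemma sum_ketBra_mem_of_forall_phase {C : Set (Matrix κ κ ℂ)} (hC : Convex ℝ C) {n : ℕ}
    (x : Fin (n + 1) → κ → ℂ)
    (hx : ∀ u : ℂ, ‖u‖ = 1 → ketBra (∑ m : Fin (n + 1), u ^ (m : ℕ) • x m) ∈ C) :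
    ∑ m, ketBra (x m) ∈ C := by
  have hpow (k m : ZMod (n + 1)) :
      (ZMod.stdAddChar (k * m) : ℂ) = ZMod.stdAddChar k ^ m.val := by
    rw [← AddChar.map_nsmul_eq_pow, nsmul_eq_mul, ZMod.natCast_zmod_val, mul_comm]
  have hmem (k : ZMod (n + 1)) :
      ketBra (∑ m : ZMod (n + 1), (ZMod.stdAddChar (k * m) : ℂ) • x m) ∈ C := by
    simp only [hpow]
    exact hx (ZMod.stdAddChar k) (AddChar.norm_apply _ _)
  have havg := inv_card_smul_sum_mem_of_convex hC univ_nonempty fun k _ ↦ hmem k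
  rwa [sum_ketBra_addChar (R := ZMod (n + 1)) (ZMod.isPrimitive_stdAddChar _) x, card_univ,
    inv_smul_smul₀ (Nat.cast_ne_zero.2 Fintype.card_ne_zero)] at havg

end RankOne

section Tensor

variable {ι κ : Type*}

/-- The product vector `x ⊗ y`. -/
def tensorVec (x : ι → ℂ) (y : κ → ℂ) : ι × κ → ℂ :=
  fun p ↦ x p.1 * y p.2

lemma kronecker_mulVec_tensorVec {μ ν : Type*} [Fintype κ] [Fintype ν]
    (A : Matrix ι κ ℂ) (B : Matrix μ ν ℂ) (x : κ → ℂ) (y : ν → ℂ) :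
    (A ⊗ₖ B) *ᵥ tensorVec x y = tensorVec (A *ᵥ x) (B *ᵥ y) := by
  ext p
  simp only [mulVec, dotProduct, tensorVec, kroneckerMap_apply, Fintype.sum_prod_type, sum_mul_sum]
  exact sum_congr rfl fun _ _ ↦ sum_congr rfl fun _ _ ↦ mul_mul_mul_comm _ _ _ _

/-- The vector `α x ⊗ y - β y ⊗ x`, in Schmidt form when `x` and `y` are orthonormal. -/
def schmidtVec (α β : ℂ) (x y : ι → ℂ) : ι × ι → ℂ :=
  α • tensorVec x y - β • tensorVec y x

lemma schmidtVec_rotate (α β c s u : ℂ) (x y : ι → ℂ) :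
    schmidtVec α β (c • x + (u * s) • y) (-s • x + (u * c) • y) =
      -((α - β) * (c * s)) • tensorVec x x
        + u • ((α * c ^ 2 + β * s ^ 2) • tensorVec x y
          + (-(α * s ^ 2 + β * c ^ 2)) • tensorVec y x)
        + u ^ 2 • ((α - β) * (c * s)) • tensorVec y y := by
  ext ⟨k, l⟩
  simp only [schmidtVec, tensorVec, Pi.add_apply, Pi.sub_apply, Pi.smul_apply, smul_eq_mul]
  ring

variable [DecidableEq ι] [DecidableEq κ]

/-- The standard basis vector `e_k`. -/
abbrev ket (k : κ) : κ → ℂ :=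
  Pi.single k 1

lemma tensorVec_ket (i : ι) (j : κ) : tensorVec (ket i) (ket j) = ket (i, j) := by
  ext ⟨k, l⟩
  simp only [tensorVec, Pi.single_apply, Prod.mk.injEq, ite_and, mul_ite, mul_one, mul_zero]
  split_ifs <;> rfl

lemma vecMulVec_ket (i j : κ) : vecMulVec (ket i) (star (ket j)) = Matrix.single i j 1 := by
  rw [Pi.star_single, star_one, single_eq_single_vecMulVec_single]

lemma ketBra_ket (k : κ) : ketBra (ket k) = Matrix.single k k 1 :=
  vecMulVec_ket k k

end Tensor

section WernerOrbit

variable {ι : Type*} [Fintype ι] [DecidableEq ι]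

lemma exists_unitaryGroup_col_eq {𝕜 : Type*} [RCLike 𝕜] {s : Set ι} {v : ι → EuclideanSpace 𝕜 ι}
    (hv : Orthonormal 𝕜 (s.domRestrict v)) :
    ∃ U : unitaryGroup ι 𝕜, ∀ i ∈ s, (U : Matrix ι ι 𝕜).col i = v i := by
  obtain ⟨b, hb⟩ := hv.exists_orthonormalBasis_extension_of_card_eq (by simp)
  refine ⟨⟨_, (EuclideanSpace.basisFun ι 𝕜).toMatrix_orthonormalBasis_mem_unitary b⟩,
    fun i hi ↦ ?_⟩
  ext k
  simp [Module.Basis.toMatrix_apply, hb i hi]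

lemma exists_unitaryGroup_mulVec_single_pair {𝕜 : Type*} [RCLike 𝕜] {z o : ι} (hzo : z ≠ o)
    {x y : ι → 𝕜} (hx : x ⬝ᵥ star x = 1) (hy : y ⬝ᵥ star y = 1) (hxy : x ⬝ᵥ star y = 0) :
    ∃ U : unitaryGroup ι 𝕜, (U : Matrix ι ι 𝕜) *ᵥ Pi.single z 1 = x ∧
      (U : Matrix ι ι 𝕜) *ᵥ Pi.single o 1 = y := by
  let v : ι → EuclideanSpace 𝕜 ι := fun i ↦ WithLp.toLp 2 (if i = z then x else y)
  have hyx : y ⬝ᵥ star x = 0 := by rw [dotProduct_star, hxy, star_zero]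
  have hv : Orthonormal 𝕜 (({z, o} : Set ι).domRestrict v) := by
    rw [orthonormal_iff_ite]
    rintro ⟨i, rfl | rfl⟩ ⟨j, rfl | rfl⟩ <;>
      simp [-inner_self_eq_norm_sq_to_K, v, EuclideanSpace.inner_toLp_toLp, Subtype.ext_iff, *,
        hzo.symm]
  obtain ⟨U, hU⟩ := exists_unitaryGroup_col_eq hv
  refine ⟨U, ?_, ?_⟩
  · simp [hU z, v]
  · simp [hU o, v, hzo.symm]

/-- The Werner orbit of `ψ`: the pure states `|(U ⊗ U)ψ⟩⟨(U ⊗ U)ψ|` with `U` unitary. -/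
def wernerOrbit (ψ : ι × ι → ℂ) : Set (Matrix (ι × ι) (ι × ι) ℂ) :=
  {A | ∃ U : unitaryGroup ι ℂ, A = ketBra (((U : Matrix ι ι ℂ) ⊗ₖ (U : Matrix ι ι ℂ)) *ᵥ ψ)}

variable {z o : ι} (hzo : z ≠ o) (α β : ℂ)
include hzo

lemma ketBra_schmidtVec_mem_wernerOrbit {x y : ι → ℂ}
    (hx : x ⬝ᵥ star x = 1) (hy : y ⬝ᵥ star y = 1) (hxy : x ⬝ᵥ star y = 0) :
    ketBra (schmidtVec α β x y) ∈ wernerOrbit (schmidtVec α β (ket z) (ket o)) := by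
  obtain ⟨U, hUz, hUo⟩ := exists_unitaryGroup_mulVec_single_pair hzo hx hy hxy
  refine ⟨U, ?_⟩
  simp only [schmidtVec, mulVec_sub, mulVec_smul, kronecker_mulVec_tensorVec, hUz, hUo]

lemma ketBra_schmidtVec_rotate_mem_wernerOrbit {i j : ι} (hij : i ≠ j) {c s : ℝ}
    (hcs : c ^ 2 + s ^ 2 = 1) {u : ℂ} (hu : ‖u‖ = 1) :
    ketBra (schmidtVec α β
        ((c : ℂ) • ket i + (u * s) • ket j) (-(s : ℂ) • ket i + (u * c) • ket j)) ∈
      wernerOrbit (schmidtVec α β (ket z) (ket o)) := by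
  have dot (p q p' q' : ℂ) :
      (p • ket i + q • ket j) ⬝ᵥ star (p' • ket i + q' • ket j) = p * star p' + q * star q' := by
    simp [hij, hij.symm, mul_comm]
  have hcs' : (c : ℂ) ^ 2 + (s : ℂ) ^ 2 = 1 := mod_cast hcs
  have hu' : u * star u = 1 := by simp [Complex.mul_conj', hu]
  apply ketBra_schmidtVec_mem_wernerOrbit hzo <;> rw [dot] <;>
    simp only [star_mul', star_neg, Complex.star_def, Complex.conj_ofReal] at hu' ⊢
  · linear_combination hcs' + (s : ℂ) ^ 2 * hu'
  · linear_combination hcs' + (c : ℂ) ^ 2 * hu'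
  · linear_combination (c * s : ℂ) * hu'

lemma dephased_mem_convexHull_wernerOrbit {i j : ι} (hij : i ≠ j) {c s : ℝ}
    (hcs : c ^ 2 + s ^ 2 = 1) :
    ‖(α - β) * (c * s)‖ ^ 2 • (ketBra (ket (i, i)) + ketBra (ket (j, j)))
        + ketBra ((α * c ^ 2 + β * s ^ 2) • ket (i, j)
          + (-(α * s ^ 2 + β * c ^ 2)) • ket (j, i)) ∈
      convexHull ℝ (wernerOrbit (schmidtVec α β (ket z) (ket o))) := by
  have h := sum_ketBra_mem_of_forall_phase (convex_convexHull ℝ _)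
    ![-((α - β) * (c * s)) • ket (i, i),
      (α * c ^ 2 + β * s ^ 2) • ket (i, j) + (-(α * s ^ 2 + β * c ^ 2)) • ket (j, i),
      ((α - β) * (c * s)) • ket (j, j)] fun u hu ↦ by
    have horbit := subset_convexHull ℝ _
      (ketBra_schmidtVec_rotate_mem_wernerOrbit hzo α β hij hcs hu)
    rw [schmidtVec_rotate] at horbit
    simpa [Fin.sum_univ_three, tensorVec_ket] using horbit
  simp only [Nat.succ_eq_add_one, Nat.reduceAdd, Fin.sum_univ_three, Matrix.cons_val, ketBra_smul,
    norm_neg] at h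
  rwa [add_right_comm, ← smul_add] at h

end WernerOrbit

section PairSums

lemma sum_offDiag_add {ι E : Type*} [Fintype ι] [AddCommGroup E] [Module ℝ E] (f : ι → E) :
    ∑ t ∈ univ.offDiag, (f t.1 + f t.2) = (2 * ((Fintype.card ι : ℝ) - 1)) • ∑ i, f i := by
  classical
  have h := sum_union (disjoint_diag_offDiag (univ : Finset ι)) (f := fun t ↦ f t.1 + f t.2)
  rw [diag_union_offDiag, sum_product, sum_diag] at h
  rw [eq_sub_of_add_eq' h.symm]
  simp only [sum_add_distrib, sum_const, card_univ, ← smul_sum, ← Nat.cast_smul_eq_nsmul ℝ]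
  module

variable (ι : Type*) [DecidableEq ι]

/-- The swap operator `W`. -/
def swapOp : Matrix (ι × ι) (ι × ι) ℂ :=
  of fun p q ↦ if p.1 = q.2 ∧ p.2 = q.1 then 1 else 0

/-- The projection `Q` onto the span of the vectors `e_{(i,i)}`. -/
def diagProj : Matrix (ι × ι) (ι × ι) ℂ :=
  of fun p q ↦ if p.1 = p.2 ∧ q = p then 1 else 0

/-- The projection `W₋` onto the antisymmetric subspace. -/
noncomputable def antisymProj : Matrix (ι × ι) (ι × ι) ℂ :=
  (2 : ℝ)⁻¹ • (1 - swapOp ι)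

/-- The projection `W₊` onto the symmetric subspace. -/
noncomputable def symProj : Matrix (ι × ι) (ι × ι) ℂ :=
  (2 : ℝ)⁻¹ • (1 + swapOp ι)

variable [Fintype ι]

lemma sum_single_diag : ∑ i : ι, Matrix.single (i, i) (i, i) (1 : ℂ) = diagProj ι := by
  ext ⟨k, l⟩ q
  simp only [Matrix.sum_apply, single_apply, Prod.mk.injEq, ite_and, sum_ite_eq', mem_univ, if_true,
    diagProj, of_apply]
  grind

lemma sum_single_offDiag :
    ∑ t ∈ (univ : Finset ι).offDiag, Matrix.single t t (1 : ℂ) = 1 - diagProj ι := by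
  ext p q
  simp only [Matrix.sum_apply, single_apply, ite_and, sum_ite_eq', mem_offDiag, mem_univ, true_and,
    diagProj, Matrix.sub_apply, Matrix.one_apply, of_apply]
  grind

lemma sum_single_swap_offDiag :
    ∑ t ∈ (univ : Finset ι).offDiag, Matrix.single t t.swap (1 : ℂ) = swapOp ι - diagProj ι := by
  ext p q
  simp only [Matrix.sum_apply, single_apply, ite_and, sum_ite_eq', mem_offDiag, mem_univ, true_and,
    swapOp, diagProj, Matrix.sub_apply, of_apply]
  grind

lemma sum_ketBra_offDiag (p q : ℂ) :
    ∑ t ∈ (univ : Finset ι).offDiag, ketBra (p • ket t + q • ket t.swap) =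
      ‖p - q‖ ^ 2 • antisymProj ι + ‖p + q‖ ^ 2 • (symProj ι - diagProj ι) := by
  have sum_swap (f : ι × ι → Matrix (ι × ι) (ι × ι) ℂ) :
      ∑ t ∈ univ.offDiag, f t.swap = ∑ t ∈ univ.offDiag, f t :=
    sum_equiv (Equiv.prodComm ι ι) (by simp [ne_comm]) (by simp)
  have sum_swap_swap : ∑ t ∈ univ.offDiag, Matrix.single t.swap t.swap (1 : ℂ) = 1 - diagProj ι :=
    (sum_swap fun t ↦ Matrix.single t t 1).trans (sum_single_offDiag ι)
  have sum_swap_fst : ∑ t ∈ univ.offDiag, Matrix.single t.swap t (1 : ℂ) = swapOp ι - diagProj ι :=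
    (sum_swap fun t ↦ Matrix.single t t.swap 1).trans (sum_single_swap_offDiag ι)
  simp only [ketBra_smul_add_smul, sum_add_distrib, ← smul_sum, ketBra_ket, vecMulVec_ket,
    sum_single_offDiag, sum_single_swap_offDiag, sum_swap_swap, sum_swap_fst, antisymProj, symProj]
  ext s t
  simp only [Matrix.add_apply, Matrix.smul_apply, Matrix.sub_apply, smul_eq_mul, Complex.real_smul,
    Complex.star_def, Complex.ofReal_pow, ← Complex.mul_conj', map_sub, map_add]
  push_cast
  ring

end PairSums

section RealParameters

lemma sq_norm_ofReal (x : ℝ) : ‖(x : ℂ)‖ ^ 2 = x ^ 2 := by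
  rw [Complex.norm_real, Real.norm_eq_abs, sq_abs]

lemma exists_sq_add_sq_eq_one_and_mul_sq_eq {x y : ℝ} (hx : x ∈ Set.Icc 0 y) :
    ∃ c s : ℝ, c ^ 2 + s ^ 2 = 1 ∧ y * (c ^ 2 - s ^ 2) ^ 2 = x := by
  have hy : 0 ≤ y := hx.1.trans hx.2
  have hle : √(x / y) ≤ 1 := Real.sqrt_le_one.2 (div_le_one_of_le₀ hx.2 hy)
  have hcos : Real.cos (Real.arccos √(x / y)) = √(x / y) :=
    Real.cos_arccos (by linarith [Real.sqrt_nonneg (x / y)]) hle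
  refine ⟨Real.cos (Real.arccos √(x / y) / 2), Real.sin (Real.arccos √(x / y) / 2),
    Real.cos_sq_add_sin_sq _, ?_⟩
  rw [← Real.cos_two_mul', mul_div_cancel₀ _ two_ne_zero, hcos, Real.sq_sqrt (div_nonneg hx.1 hy)]
  exact mul_div_cancel_of_imp' fun hy₀ ↦ le_antisymm (hy₀ ▸ hx.2) hx.1

lemma sqrt_half_add_add_sqrt_mul {x y : ℝ} (hx : 0 ≤ x) (hy : 0 ≤ y) :
    √((x + y) / 2 + √(x * y)) = (√x + √y) / √2 := by
  have h : (x + y) / 2 + √(x * y) = ((√x + √y) / √2) ^ 2 := by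
    rw [div_pow, add_sq, Real.sq_sqrt hx, Real.sq_sqrt hy, Real.sq_sqrt zero_le_two,
      Real.sqrt_mul hx]
    ring
  rw [h, Real.sqrt_sq (by positivity)]

lemma sqrt_half_add_sub_sqrt_mul {x y : ℝ} (hy : 0 ≤ y) (hyx : y ≤ x) :
    √((x + y) / 2 - √(x * y)) = (√x - √y) / √2 := by
  have hx := hy.trans hyx
  have h : (x + y) / 2 - √(x * y) = ((√x - √y) / √2) ^ 2 := by
    rw [div_pow, sub_sq, Real.sq_sqrt hx, Real.sq_sqrt hy, Real.sq_sqrt zero_le_two,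
      Real.sqrt_mul hx]
    ring
  rw [h, Real.sqrt_sq (div_nonneg (sub_nonneg.2 (Real.sqrt_le_sqrt hyx)) (Real.sqrt_nonneg 2))]

lemma sq_sqrt_add_sqrt_half_add {x y : ℝ} (hy : 0 ≤ y) (hyx : y ≤ x) :
    (√((x + y) / 2 + √(x * y)) + √((x + y) / 2 - √(x * y))) ^ 2 = 2 * x := by
  have hx := hy.trans hyx
  rw [sqrt_half_add_add_sqrt_mul hx hy, sqrt_half_add_sub_sqrt_mul hy hyx, ← add_div, div_pow,
    Real.sq_sqrt zero_le_two, add_add_sub_cancel, ← two_mul, mul_pow, Real.sq_sqrt hx]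
  ring

lemma sq_sqrt_sub_sqrt_half_add {x y : ℝ} (hy : 0 ≤ y) (hyx : y ≤ x) :
    (√((x + y) / 2 + √(x * y)) - √((x + y) / 2 - √(x * y))) ^ 2 = 2 * y := by
  have hx := hy.trans hyx
  rw [sqrt_half_add_add_sqrt_mul hx hy, sqrt_half_add_sub_sqrt_mul hy hyx, ← sub_div, div_pow,
    Real.sq_sqrt zero_le_two, add_sub_sub_cancel, ← two_mul, mul_pow, Real.sq_sqrt hy]
  ring

end RealParameters

section Twirl

variable {ι : Type*} [Fintype ι] [DecidableEq ι] {z o : ι}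

lemma twirled_mem_convexHull_wernerOrbit (hzo : z ≠ o) (α β : ℂ) {c s : ℝ}
    (hcs : c ^ 2 + s ^ 2 = 1) :
    ((Fintype.card ι : ℝ) * ((Fintype.card ι : ℝ) - 1))⁻¹ •
        ((2 * ((Fintype.card ι : ℝ) - 1) * ‖(α - β) * (c * s)‖ ^ 2) • diagProj ι
          + ‖α + β‖ ^ 2 • antisymProj ι
          + ‖(α - β) * (c ^ 2 - s ^ 2)‖ ^ 2 • (symProj ι - diagProj ι)) ∈
      convexHull ℝ (wernerOrbit (schmidtVec α β (ket z) (ket o))) := by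
  have hcs' : (c : ℂ) ^ 2 + (s : ℂ) ^ 2 = 1 := mod_cast hcs
  have havg := inv_card_smul_sum_mem_of_convex (convex_convexHull ℝ _)
    ⟨(z, o), mem_offDiag.2 ⟨mem_univ _, mem_univ _, hzo⟩⟩
    fun t ht ↦ dephased_mem_convexHull_wernerOrbit hzo α β (mem_offDiag.1 ht).2.2 hcs
  convert havg using 2
  · rw [offDiag_card, Nat.cast_sub (Nat.le_mul_self _)]
    push_cast
    rw [card_univ]
    ring
  · have hanti : α * c ^ 2 + β * s ^ 2 - -(α * s ^ 2 + β * c ^ 2) = α + β := by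
      linear_combination (α + β) * hcs'
    have hsym : α * c ^ 2 + β * s ^ 2 + -(α * s ^ 2 + β * c ^ 2)
        = (α - β) * (c ^ 2 - s ^ 2) := by ring
    have hpairs := sum_ketBra_offDiag ι (α * c ^ 2 + β * s ^ 2) (-(α * s ^ 2 + β * c ^ 2))
    rw [hanti, hsym] at hpairs
    have hdiag := sum_offDiag_add fun i : ι ↦ ketBra (ket (i, i))
    simp only [ketBra_ket, sum_single_diag] at hdiag
    simp only [Prod.swap] at hpairs
    simp only [sum_add_distrib, ← smul_sum, ketBra_ket, hdiag, hpairs]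
    module

theorem phasePermWerner_mem_convexHull_wernerOrbit_general (hzo : z ≠ o) {α β : ℂ} {a b : ℝ}
    (hadd : ‖α + β‖ ^ 2 = 2 * a) (hsub : ‖α - β‖ ^ 2 = 2 * (1 - a))
    (hb : b ∈ Set.Icc 0 (1 - a)) :
    (2 * a / (Fintype.card ι * ((Fintype.card ι : ℝ) - 1))) • antisymProj ι
        + (2 * b / (Fintype.card ι * ((Fintype.card ι : ℝ) - 1))) • (symProj ι - diagProj ι)
        + ((1 - a - b) / Fintype.card ι) • diagProj ι ∈
      convexHull ℝ (wernerOrbit (schmidtVec α β (ket z) (ket o))) := by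
  obtain ⟨c, s, hcs, hcsb⟩ := exists_sq_add_sq_eq_one_and_mul_sq_eq hb
  have hsym : ‖(α - β) * (c ^ 2 - s ^ 2)‖ ^ 2 = 2 * b := by
    rw [norm_mul, mul_pow, hsub, ← Complex.ofReal_pow c, ← Complex.ofReal_pow s,
      ← Complex.ofReal_sub, sq_norm_ofReal]
    linear_combination 2 * hcsb
  have hdiag : 2 * ‖(α - β) * (c * s)‖ ^ 2 = 1 - a - b := by
    rw [norm_mul, mul_pow, hsub, ← Complex.ofReal_mul, sq_norm_ofReal]
    linear_combination (1 - a) * (c ^ 2 + s ^ 2 + 1) * hcs - hcsb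
  have hcard : (Fintype.card ι : ℝ) - 1 ≠ 0 := by
    have := Fintype.one_lt_card_iff.2 ⟨z, o, hzo⟩
    exact sub_ne_zero.2 (mod_cast this.ne')
  convert twirled_mem_convexHull_wernerOrbit hzo α β hcs using 1
  rw [hadd, hsym, mul_right_comm, hdiag]
  match_scalars <;> field_simp
  ring

end Twirl

end WernerTwirl

/-- For `a ∈ [1/2,1]` and `b ∈ [0,1−a]`, the phase-permutation Werner state
`ρ = (2a/(d(d−1)))W₋ + (2b/(d(d−1)))(W₊ − Q) + ((1−a−b)/d)Q` lies in the convex hull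
of the Werner orbit `{ |(U⊗U)ψ_a⟩⟨(U⊗U)ψ_a| : U unitary }` of the minimizing pure
state `ψ_a = √(1/2+√(a(1−a)))|01⟩ − √(1/2−√(a(1−a)))|10⟩`. -/
theorem phasePermWerner_mem_convexHull_wernerOrbit (d : ℕ) (hd : 2 ≤ d)
    (a b : ℝ) (ha : a ∈ Set.Icc (1 / 2 : ℝ) 1) (hb : b ∈ Set.Icc (0 : ℝ) (1 - a))
    (W : Matrix (Fin d × Fin d) (Fin d × Fin d) ℂ)
    (hW : ∀ p q, W p q = if p.1 = q.2 ∧ p.2 = q.1 then 1 else 0)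
    (Wm Wp : Matrix (Fin d × Fin d) (Fin d × Fin d) ℂ)
    (hWm : Wm = (2 : ℝ)⁻¹ • (1 - W)) (hWp : Wp = (2 : ℝ)⁻¹ • (1 + W))
    (Q : Matrix (Fin d × Fin d) (Fin d × Fin d) ℂ)
    (hQ : ∀ p q, Q p q = if p.1 = p.2 ∧ q = p then 1 else 0)
    (ψa : Fin d × Fin d → ℂ)
    (hψa : ψa = fun p =>
      (if p = ((⟨0, by omega⟩ : Fin d), (⟨1, by omega⟩ : Fin d)) then
          ((Real.sqrt (1 / 2 + Real.sqrt (a * (1 - a))) : ℝ) : ℂ) else 0)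
      - (if p = ((⟨1, by omega⟩ : Fin d), (⟨0, by omega⟩ : Fin d)) then
          ((Real.sqrt (1 / 2 - Real.sqrt (a * (1 - a))) : ℝ) : ℂ) else 0)) :
    (2 * a / (d * ((d : ℝ) - 1))) • Wm + (2 * b / (d * ((d : ℝ) - 1))) • (Wp - Q)
        + ((1 - a - b) / d) • Q ∈
      convexHull ℝ { A : Matrix (Fin d × Fin d) (Fin d × Fin d) ℂ |
        ∃ U : Matrix.unitaryGroup (Fin d) ℂ,
          A = Matrix.vecMulVec
            ((Matrix.kroneckerMap (· * ·) (U : Matrix (Fin d) (Fin d) ℂ)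
              (U : Matrix (Fin d) (Fin d) ℂ)).mulVec ψa)
            (star ((Matrix.kroneckerMap (· * ·) (U : Matrix (Fin d) (Fin d) ℂ)
              (U : Matrix (Fin d) (Fin d) ℂ)).mulVec ψa)) } := by
  obtain rfl : W = swapOp (Fin d) := Matrix.ext hW
  obtain rfl : Q = diagProj (Fin d) := Matrix.ext hQ
  subst hWm hWp
  have hle : 1 - a ≤ a := by linarith [ha.1]
  have hadd := sq_sqrt_add_sqrt_half_add (sub_nonneg.2 ha.2) hle
  have hsub := sq_sqrt_sub_sqrt_half_add (sub_nonneg.2 ha.2) hle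
  rw [add_sub_cancel] at hadd hsub
  set α := √(1 / 2 + √(a * (1 - a)))
  set β := √(1 / 2 - √(a * (1 - a)))
  have hzo : (⟨0, by omega⟩ : Fin d) ≠ ⟨1, by omega⟩ := by simp
  have hψ : ψa = schmidtVec α β (ket ⟨0, by omega⟩) (ket ⟨1, by omega⟩) := by
    simp [funext_iff, hψa, schmidtVec, tensorVec_ket, Pi.single_apply]
  rw [← sq_norm_ofReal, Complex.ofReal_add] at hadd
  rw [← sq_norm_ofReal, Complex.ofReal_sub] at hsub
  have h := phasePermWerner_mem_convexHull_wernerOrbit_general hzo hadd hsub hb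
  rwa [← hψ, Fintype.card_fin] at h
end

section
/- Fix an integer d ≥ 2, let b ∈ [1/d, 1], and let λ : Fin d → ℝ satisfy λᵢ ≥ 0, Σᵢ λᵢ = 1 and Σᵢ √λᵢ = √(d·b). Assume there exist an integer k with 1 ≤ k ≤ d−1 and a real t such that either (i) λᵢ = t for i < k and λᵢ = (1−k·t)/(d−k) for i ≥ k, with t ≥ (1−k·t)/(d−k) ≥ 0, or (ii) λᵢ = t for i < k, λ_k = 1−k·t, and λᵢ = 0 for i > k, with t ≥ 1−k·t ≥ 0. Set φ := Σᵢ √λᵢ·e_{(i,i)}. Then for every a ∈ [0, d(1−b)/(2(d−1))], the matrix ρ = (2a/(d(d−1)))·W₋ + b·Φ_d + ((1−a−b)/(d(d+1)/2 − 1))·(𝟙 − Φ_d − W₋) lies in the convex hull, taken in the real vector space of (d²)×(d²) complex matrices, of the isotropic orbit orb_iso(φ) = { |(U ⊗ conj(U))φ⟩⟨(U ⊗ conj(U))φ| : U a d×d unitary }. -/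
open scoped BigOperators

/-!
The convex hull of the isotropic orbit is compact and invariant under conjugation by `V ⊗ V` for
every real orthogonal `V`. Write `W` for the swap operator and `Ω = ∑ i j, |ii⟩⟨jj|`. A point of
the orbit is the projector onto the vectorisation of `M = U D Uᴴ`, where `D` is diagonal with
entries `s i = √(λ i)`, so `tr A = ∑ i, s i ^ 2` and `tr (Ω A) = (∑ i, s i) ^ 2` are constant on
it, while `tr (W A) = tr (Mᴴ Mᵀ)` takes the value `∑ i, s i * s (σ i)` for every involution `σ`:
choose `U` unitary with `Uᵀ U` the permutation matrix of `σ`. The identity gives `1`; reversing the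
order of the sorted entries gives, by Chebyshev's inequality, at most
`((∑ i, s i) ^ 2 - ∑ i, s i ^ 2) / (d - 1) = (d b - 1) / (d - 1) ≤ 1 - 2 a`.
Hence some point of the hull has `tr (W A) = 1 - 2 a`, and among those points the one of least
Frobenius norm commutes with every `V ⊗ V`. It therefore lies in the span of `1`, `W` and `Ω`, where
the three traces determine it.
-/

open Matrix Module
open scoped Kronecker

section Involution

variable {ι R : Type*} [Fintype ι] [CommRing R]

theorem sq_sum_sub_sum_sq_sub_sum_mul_perm_sub_const (σ : Equiv.Perm ι) (y : ι → R) (c : R) :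
    (∑ i, (y i - c)) ^ 2 - ∑ i, (y i - c) ^ 2
        - (Fintype.card ι - 1) * ∑ i, (y i - c) * (y (σ i) - c) =
      (∑ i, y i) ^ 2 - ∑ i, y i ^ 2 - (Fintype.card ι - 1) * ∑ i, y i * y (σ i) := by
  have hmul : ∀ i, (y i - c) * (y (σ i) - c) = y i * y (σ i) - c * y i - c * y (σ i) + c ^ 2 :=
    fun i => by ring
  have hsq : ∀ i, (y i - c) ^ 2 = y i ^ 2 - 2 * c * y i + c ^ 2 := fun i => by ring
  simp only [hmul, hsq, Finset.sum_add_distrib, Finset.sum_sub_distrib, ← Finset.mul_sum,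
    Equiv.sum_comp σ y, Finset.sum_const, Finset.card_univ, nsmul_eq_mul]
  ring

variable [LinearOrder R] [IsStrictOrderedRing R] {n : ℕ}

theorem sum_mul_sum_le_mul_sum_mul_rev {p q : Fin (n + 1) → R} (hp : Monotone p)
    (hq : Antitone q) (hp0 : p 0 = 0) (hq0 : q (Fin.last n) = 0) :
    (∑ i, p i) * ∑ i, q i ≤ n * ∑ i, p i * q i.rev := by
  have hmono : Monovary (fun i : Fin n => p i.succ) fun i => q i.succ.rev :=
    Monotone.monovary (fun i j h => hp (by simpa using h)) (fun i j h => hq (by simpa using h))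
  rw [← Equiv.sum_comp Fin.revPerm q]
  simpa [Fin.sum_univ_succ (n := n), hp0, hq0] using hmono.sum_mul_sum_le_card_mul_sum

theorem mul_sum_mul_rev_le_of_mul_rev_nonpos {y : Fin (n + 1) → R} (hy : Monotone y)
    (hrev : ∀ i, y i * y i.rev ≤ 0) :
    n * ∑ i, y i * y i.rev ≤ (∑ i, y i) ^ 2 - ∑ i, y i ^ 2 := by
  have hends : y 0 ≤ 0 ∧ 0 ≤ y (Fin.last n) := by
    have h0 := hrev 0
    have hle : y 0 ≤ y (Fin.last n) := hy (Fin.zero_le _)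
    rw [Fin.rev_zero] at h0
    rcases mul_nonpos_iff.mp h0 with h | h
    · exact ⟨hle.trans h.2, h.1.trans hle⟩
    · exact h
  have hcheb : (∑ i, (y i)⁺) * ∑ i, (y i)⁻ ≤ n * ∑ i, (y i)⁺ * (y i.rev)⁻ :=
    sum_mul_sum_le_mul_sum_mul_rev (fun i j h => posPart_mono (hy h))
      (fun i j h => negPart_anti (hy h)) (posPart_eq_zero.mpr hends.1)
      (negPart_eq_zero.mpr hends.2)
  have hprod : ∀ i, y i * y i.rev = -((y i)⁺ * (y i.rev)⁻ + (y i.rev)⁺ * (y i)⁻) := fun i => by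
    rcases mul_nonpos_iff.mp (hrev i) with ⟨h, h'⟩ | ⟨h, h'⟩ <;>
      simp [posPart_of_nonneg, negPart_of_nonneg, posPart_of_nonpos, negPart_of_nonpos, h, h',
        mul_comm]
  have hswap : ∑ i, (y i.rev)⁺ * (y i)⁻ = ∑ i, (y i)⁺ * (y i.rev)⁻ := by
    simpa using (Equiv.sum_comp Fin.revPerm fun i => (y i.rev)⁺ * (y i)⁻).symm
  have hsum : ∑ i, y i = ∑ i, (y i)⁺ - ∑ i, (y i)⁻ := by
    simp [← Finset.sum_sub_distrib, posPart_sub_negPart]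
  have hsq : ∑ i, y i ^ 2 = ∑ i, (y i)⁺ ^ 2 + ∑ i, (y i)⁻ ^ 2 := by
    rw [← Finset.sum_add_distrib]
    refine Finset.sum_congr rfl fun i _ => ?_
    rcases le_total 0 (y i) with h | h <;>
      simp [posPart_of_nonneg, negPart_of_nonneg, posPart_of_nonpos, negPart_of_nonpos, h]
  have hpos : ∑ i, (y i)⁺ ^ 2 ≤ (∑ i, (y i)⁺) ^ 2 :=
    Finset.sum_sq_le_sq_sum_of_nonneg fun i _ => posPart_nonneg _
  have hneg : ∑ i, (y i)⁻ ^ 2 ≤ (∑ i, (y i)⁻) ^ 2 :=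
    Finset.sum_sq_le_sq_sum_of_nonneg fun i _ => negPart_nonneg _
  simp only [hprod, Finset.sum_neg_distrib, Finset.sum_add_distrib, hswap, hsum, hsq]
  linarith

theorem mul_sum_mul_rev_le_of_monotone {y : Fin (n + 1) → R} (hy : Monotone y) :
    n * ∑ i, y i * y i.rev ≤ (∑ i, y i) ^ 2 - ∑ i, y i ^ 2 := by
  -- Centring at the median `y m` gives `y i` and `y i.rev` opposite signs.
  let m : Fin (n + 1) := ⟨n / 2, by omega⟩
  have hrev : ∀ i, (y i - y m) * (y i.rev - y m) ≤ 0 := fun i => by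
    rcases le_or_gt i m with h | h
    · have h' : m ≤ i.rev := by simp only [Fin.le_def, Fin.val_rev, m] at h ⊢; omega
      exact mul_nonpos_of_nonpos_of_nonneg (sub_nonpos.mpr (hy h)) (sub_nonneg.mpr (hy h'))
    · have h' : i.rev ≤ m := by simp only [Fin.le_def, Fin.lt_def, Fin.val_rev, m] at h ⊢; omega
      exact mul_nonpos_of_nonneg_of_nonpos (sub_nonneg.mpr (hy h.le)) (sub_nonpos.mpr (hy h'))
  have hle := mul_sum_mul_rev_le_of_mul_rev_nonpos (y := fun i => y i - y m)
    (fun i j h => sub_le_sub_right (hy h) _) hrev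
  have hshift := sq_sum_sub_sum_sq_sub_sum_mul_perm_sub_const Fin.revPerm y (y m)
  simp only [Fintype.card_fin, Nat.cast_add, Nat.cast_one, add_sub_cancel_right,
    Fin.revPerm_apply] at hshift
  linarith

theorem exists_involutive_card_sub_one_mul_sum_mul_le [Nonempty ι] (y : ι → R) :
    ∃ σ : Equiv.Perm ι, Function.Involutive σ ∧
      (Fintype.card ι - 1) * ∑ i, y i * y (σ i) ≤ (∑ i, y i) ^ 2 - ∑ i, y i ^ 2 := by
  obtain ⟨n, hn⟩ := Nat.exists_eq_succ_of_ne_zero (Fintype.card_ne_zero (α := ι))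
  let f : Fin (n + 1) ≃ ι := (Fintype.equivFinOfCardEq hn).symm
  let e : Fin (n + 1) ≃ ι := (Tuple.sort (y ∘ f)).trans f
  refine ⟨e.permCongr Fin.revPerm, fun i => by simp [Equiv.permCongr_apply], ?_⟩
  have hle := mul_sum_mul_rev_le_of_monotone (y := y ∘ e) (Tuple.monotone_sort (y ∘ f))
  simpa [← Equiv.sum_comp e, Equiv.permCongr_apply, hn] using hle

end Involution

section Compact

theorem isCompact_convexHull_of_finiteDimensional {E : Type*} [AddCommGroup E] [Module ℝ E]
    [TopologicalSpace E] [IsTopologicalAddGroup E] [ContinuousSMul ℝ E] [FiniteDimensional ℝ E]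
    {s : Set E} (hs : IsCompact s) : IsCompact (convexHull ℝ s) := by
  let combos (k : ℕ) : Set E := (fun p : (Fin k → ℝ) × (Fin k → E) => ∑ i, p.1 i • p.2 i) ''
    (stdSimplex ℝ (Fin k) ×ˢ Set.univ.pi fun _ => s)
  have hcombos : ∀ k, IsCompact (combos k) := fun k =>
    ((isCompact_stdSimplex ℝ (Fin k)).prod (isCompact_univ_pi fun _ => hs)).image (by fun_prop)
  have hunion : convexHull ℝ s = ⋃ k ∈ Finset.range (finrank ℝ E + 2), combos k := by
    refine Set.Subset.antisymm (fun x hx => ?_) (Set.iUnion₂_subset fun k _ => ?_)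
    · obtain ⟨κ, _, z, w, hz, hind, hw, hw1, rfl⟩ := eq_pos_convex_span_of_mem_convexHull hx
      have hcard : Fintype.card κ < finrank ℝ E + 2 :=
        Nat.lt_succ_of_le (hind.card_le_finrank_succ.trans
          (Nat.succ_le_succ (Submodule.finrank_le _)))
      let e := (Fintype.equivFin κ).symm
      refine Set.mem_biUnion (Finset.mem_coe.mpr (Finset.mem_range.mpr hcard))
        ⟨(w ∘ e, z ∘ e), ⟨⟨fun i => (hw _).le, ?_⟩, fun i _ => hz ⟨e i, rfl⟩⟩, ?_⟩
      · simpa only [Function.comp_apply, Equiv.sum_comp e w] using hw1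
      · exact Equiv.sum_comp e fun i => w i • z i
    · rintro _ ⟨⟨w, z⟩, ⟨⟨hw, hw1⟩, hz⟩, rfl⟩
      exact (convex_convexHull ℝ s).sum_mem (fun i _ => hw i) hw1
        fun i _ => subset_convexHull ℝ s (hz i trivial)
  rw [hunion]
  exact (Finset.range _).isCompact_biUnion fun k _ => hcombos k

variable {m 𝕜 : Type*} [Fintype m] [RCLike 𝕜]

theorem re_trace_conjTranspose_mul_self_midpoint (A B : Matrix m m 𝕜) :
    RCLike.re (((2 : ℝ)⁻¹ • A + (2 : ℝ)⁻¹ • B)ᴴ * ((2 : ℝ)⁻¹ • A + (2 : ℝ)⁻¹ • B)).trace =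
      (RCLike.re (Aᴴ * A).trace + RCLike.re (Bᴴ * B).trace) / 2 -
        RCLike.re ((A - B)ᴴ * (A - B)).trace / 4 := by
  simp only [conjTranspose_add, conjTranspose_sub, conjTranspose_smul, star_trivial,
    Matrix.mul_add, Matrix.add_mul, Matrix.mul_sub, Matrix.sub_mul, Matrix.mul_smul, smul_mul,
    smul_add, trace_add, trace_sub, trace_smul, map_add, map_sub, RCLike.smul_re]
  ring

variable [DecidableEq m]

theorem isCompact_unitaryGroup : IsCompact (unitaryGroup m 𝕜 : Set (Matrix m m 𝕜)) := by
  have hbox : IsCompact (Set.univ.pi fun _ : m => Set.univ.pi fun _ : m =>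
      Metric.closedBall (0 : 𝕜) 1) :=
    isCompact_univ_pi fun _ => isCompact_univ_pi fun _ => isCompact_closedBall _ _
  refine hbox.of_isClosed_subset ?_ fun U hU i _ j _ => by
    simpa using entry_norm_bound_of_unitary hU i j
  have : (unitaryGroup m 𝕜 : Set (Matrix m m 𝕜)) = {U | U * star U = 1} :=
    Set.ext fun U => mem_unitaryGroup_iff
  rw [this]
  exact isClosed_eq (by fun_prop) continuous_const

open scoped ComplexOrder in
theorem exists_mem_forall_unitary_commute {K : Set (Matrix m m 𝕜)} (hK : IsCompact K)
    (hconv : Convex ℝ K) (hne : K.Nonempty) :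
    ∃ A ∈ K, ∀ U ∈ unitaryGroup m 𝕜, (∀ B ∈ K, U * B * Uᴴ ∈ K) → Commute U A := by
  obtain ⟨A, hA, hmin⟩ := hK.exists_isMinOn hne
    (f := fun A => RCLike.re (Aᴴ * A).trace) (by fun_prop)
  refine ⟨A, hA, fun U hU hUK => ?_⟩
  have hUU : Uᴴ * U = 1 := mem_unitaryGroup_iff'.mp hU
  set B := U * A * Uᴴ with hB
  have hnorm : (Bᴴ * B).trace = (Aᴴ * A).trace := by
    calc (Bᴴ * B).trace = (U * (Aᴴ * (Uᴴ * U) * A) * Uᴴ).trace := by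
          simp only [hB, conjTranspose_mul, conjTranspose_conjTranspose, Matrix.mul_assoc]
      _ = (Uᴴ * U * (Aᴴ * (Uᴴ * U) * A)).trace := by
          rw [Matrix.trace_mul_comm, ← Matrix.mul_assoc]
      _ = (Aᴴ * A).trace := by simp only [hUU, Matrix.one_mul, Matrix.mul_one]
  have hmid : RCLike.re (Aᴴ * A).trace ≤ RCLike.re (((2 : ℝ)⁻¹ • A + (2 : ℝ)⁻¹ • B)ᴴ *
      ((2 : ℝ)⁻¹ • A + (2 : ℝ)⁻¹ • B)).trace :=
    hmin (hconv hA (hUK A hA) (by norm_num) (by norm_num) (by norm_num))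
  rw [re_trace_conjTranspose_mul_self_midpoint, hnorm] at hmid
  have hdiff : ((A - B)ᴴ * (A - B)).trace = 0 := by
    have hnonneg := RCLike.nonneg_iff.mp
      (posSemidef_conjTranspose_mul_self (A - B)).trace_nonneg
    exact RCLike.ext (by simpa using le_antisymm (by linarith) hnonneg.1) (by simpa using hnonneg.2)
  have hAB : A = U * A * Uᴴ :=
    sub_eq_zero.mp (trace_conjTranspose_mul_self_eq_zero_iff.mp hdiff)
  calc U * A = U * A * (Uᴴ * U) := by rw [hUU, Matrix.mul_one]
    _ = A * U := by rw [← Matrix.mul_assoc, ← hAB]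

end Compact

section OrthogonalInvariance

variable (n R : Type*) [DecidableEq n]

/-- The swap operator on a bipartite system, exchanging the two tensor factors. -/
def swapMatrix [Zero R] [One R] : Matrix (n × n) (n × n) R :=
  (Equiv.prodComm n n).toPEquiv.toMatrix

/-- The unnormalised maximally entangled projector `∑ i j, |ii⟩⟨jj|`; its vector `∑ i, |ii⟩` is the
vectorised identity matrix. -/
def maxEntangled [MulZeroOneClass R] : Matrix (n × n) (n × n) R :=
  vecMulVec (vec (1 : Matrix n n R)) (vec (1 : Matrix n n R))

/-- The span of the identity, the swap operator and the maximally entangled projector: the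
commutant of the operators `V ⊗ V` with `V` orthogonal. -/
def ooSpan [CommRing R] : Submodule R (Matrix (n × n) (n × n) R) :=
  Submodule.span R {1, swapMatrix n R, maxEntangled n R}

variable {n R}

theorem swapMatrix_apply [Zero R] [One R] (p q : n × n) :
    swapMatrix n R p q = if p.1 = q.2 ∧ p.2 = q.1 then 1 else 0 := by
  simp [swapMatrix, PEquiv.toMatrix_apply, Prod.ext_iff, and_comm]

theorem maxEntangled_apply [MulZeroOneClass R] (p q : n × n) :
    maxEntangled n R p q = if p.1 = p.2 ∧ q.1 = q.2 then 1 else 0 := by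
  simp [maxEntangled, vecMulVec_apply, vec, Matrix.one_apply, eq_comm, ← ite_and, and_comm]

theorem kronecker_self_commute_swapMatrix [Fintype n] [CommSemiring R] (V : Matrix n n R) :
    Commute (V ⊗ₖ V) (swapMatrix n R) := by
  rw [Commute, SemiconjBy, swapMatrix, PEquiv.mul_toMatrix_toPEquiv, PEquiv.toMatrix_toPEquiv_mul]
  ext p q
  simp [mul_comm]

variable {𝕜 : Type*} [Fintype n] [RCLike 𝕜]

/-- Invariance under conjugation by `V ⊗ V` for all real orthogonal `V`. -/
def IsOOInvariant (A : Matrix (n × n) (n × n) 𝕜) : Prop :=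
  ∀ V ∈ orthogonalGroup n ℝ,
    Commute (V.map (algebraMap ℝ 𝕜) ⊗ₖ V.map (algebraMap ℝ 𝕜)) A

theorem permMatrix_mem_orthogonalGroup (σ : Equiv.Perm n) :
    σ.permMatrix ℝ ∈ orthogonalGroup n ℝ := by
  rw [mem_orthogonalGroup_iff', transpose_permMatrix, ← permMatrix_mul, mul_inv_cancel,
    permMatrix_one]

theorem diagonal_mem_orthogonalGroup {f : n → ℝ} (hf : ∀ i, f i * f i = 1) :
    diagonal f ∈ orthogonalGroup n ℝ := by
  simp [mem_orthogonalGroup_iff, hf]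

theorem one_sub_smul_vecMulVec_self_mem_orthogonalGroup {u : n → ℝ} (hu : u ⬝ᵥ u ≠ 0) :
    1 - (2 / (u ⬝ᵥ u)) • vecMulVec u u ∈ orthogonalGroup n ℝ := by
  have hsq : vecMulVec u u * vecMulVec u u = (u ⬝ᵥ u) • vecMulVec u u := by
    rw [vecMulVec_mul_vecMulVec, vecMulVec_smul]
  rw [mem_orthogonalGroup_iff, transpose_sub, transpose_smul, transpose_one, transpose_vecMulVec]
  simp only [Matrix.sub_mul, Matrix.mul_sub, Matrix.one_mul, Matrix.mul_one, Matrix.smul_mul,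
    Matrix.mul_smul, hsq, smul_smul, div_mul_cancel₀ 2 hu]
  module

namespace IsOOInvariant

variable {A : Matrix (n × n) (n × n) 𝕜} (hA : IsOOInvariant A)
include hA

theorem apply_perm (σ : Equiv.Perm n) (i j k l : n) :
    A (σ i, σ j) (σ k, σ l) = A (i, j) (k, l) := by
  have hP : (σ.permMatrix ℝ).map (algebraMap ℝ 𝕜) ⊗ₖ (σ.permMatrix ℝ).map (algebraMap ℝ 𝕜) =
      (Equiv.prodCongr σ σ).toPEquiv.toMatrix := by
    ext p q
    simp [PEquiv.toMatrix_apply, Prod.ext_iff, ← ite_and, and_comm]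
  have h := hA _ (permMatrix_mem_orthogonalGroup σ)
  rw [hP, Commute, SemiconjBy, PEquiv.mul_toMatrix_toPEquiv, PEquiv.toMatrix_toPEquiv_mul] at h
  simpa using congr_fun₂ h (i, j) (σ k, σ l)

theorem sign_mul_apply {f : n → ℝ} (hf : ∀ i, f i * f i = 1) (i j k l : n) :
    ((f i * f j : ℝ) : 𝕜) * A (i, j) (k, l) = A (i, j) (k, l) * ((f k * f l : ℝ) : 𝕜) := by
  have h := congr_fun₂ (hA _ (diagonal_mem_orthogonalGroup hf)).eq (i, j) (k, l)
  simpa [diagonal_map, diagonal_kronecker_diagonal] using h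

theorem apply_eq_zero {i j k l : n} (h₁ : ¬(i = k ∧ j = l)) (h₂ : ¬(i = l ∧ j = k))
    (h₃ : ¬(i = j ∧ k = l)) : A (i, j) (k, l) = 0 := by
  let f (p x : n) : ℝ := if x = p then -1 else 1
  -- Some index occurs an odd number of times among `i, j, k, l`.
  obtain ⟨p, hp⟩ : ∃ p, f p i * f p j = -(f p k * f p l) := by
    by_contra! h
    have hi := h i
    have hj := h j
    have hk := h k
    grind
  have h := hA.sign_mul_apply (f := f p) (fun x => by simp only [f]; split_ifs <;> norm_num) i j k l
  have hne : f p k * f p l ≠ 0 := by simp only [f]; split_ifs <;> norm_num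
  rw [hp, mul_comm] at h
  simpa [neg_eq_iff_add_eq_zero, ← two_mul, mul_ne_zero_iff.mp hne] using h

theorem apply_self_self {p q : n} (hpq : p ≠ q) :
    A (p, p) (p, p) = A (p, q) (p, q) + A (p, q) (q, p) + A (p, p) (q, q) := by
  -- The reflection `V` mixes `p` and `q` through the block `!![3/5, 4/5; 4/5, -3/5]`; the
  -- `((p, p), (p, q))` entry of the commutation relation is `-12/25` times the claim.
  let u : n → ℝ := Pi.single p 1 - Pi.single q 2
  have huu : u ⬝ᵥ u = 5 := by norm_num [u, hpq, hpq.symm]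
  let V : Matrix n n ℝ := 1 - (2 / (u ⬝ᵥ u)) • vecMulVec u u
  have hV : ∀ i j, V i j = (1 : Matrix n n ℝ) i j - 2 / 5 * (u i * u j) := fun i j => by
    simp [V, huu, vecMulVec_apply]
  have hVp : ∀ i, i ≠ p → i ≠ q → V i p = 0 := fun i hp hq => by simp [hV, u, hp, hq]
  have hVpp : V p p = 3 / 5 := by norm_num [hV, u, hpq]
  have hVpq : V p q = 4 / 5 := by norm_num [hV, u, hpq, hpq.symm]
  have hVqp : V q p = 4 / 5 := by norm_num [hV, u, hpq, hpq.symm]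
  have hVqq : V q q = -(3 / 5) := by norm_num [hV, u, hpq.symm]
  have hqp : A (q, p) (p, q) = A (p, q) (q, p) := by
    simpa using hA.apply_perm (Equiv.swap p q) p q q p
  have h := congr_fun₂ (hA V (one_sub_smul_vecMulVec_self_mem_orthogonalGroup
    (by rw [huu]; norm_num))).eq (p, p) (p, q)
  rw [Matrix.mul_apply, Matrix.mul_apply, Fintype.sum_eq_add (p, q) (q, p) (by simp [hpq]),
    Fintype.sum_eq_add (p, p) (q, q) (by simp [hpq])] at h
  · simp only [kroneckerMap_apply, Matrix.map_apply, hVpp, hVpq, hVqp, hVqq, hqp, map_div₀,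
      map_neg, map_ofNat] at h
    linear_combination (-25 / 12) * h
  · rintro ⟨k, l⟩ ⟨hp, hq⟩
    by_cases hkl : k = l
    · subst hkl
      simp [hVp k (by grind) (by grind)]
    · rw [hA.apply_eq_zero (by grind) (by grind) (by grind), zero_mul]
  · rintro ⟨i, j⟩ ⟨hij, hji⟩
    rw [hA.apply_eq_zero (by grind) (by grind) (by grind), mul_zero]

theorem mem_ooSpan [Nontrivial n] : A ∈ ooSpan n 𝕜 := by
  obtain ⟨p, q, hpq⟩ := exists_pair_ne n
  have hmove : ∀ {i j : n}, i ≠ j → ∃ σ : Equiv.Perm n, σ p = i ∧ σ q = j := fun hij =>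
    MulAction.is_two_pretransitive_iff.mp (Equiv.Perm.isMultiplyPretransitive n 2) hpq hij
  refine Submodule.mem_span_triple.mpr
    ⟨A (p, q) (p, q), A (p, q) (q, p), A (p, p) (q, q), Eq.symm (Matrix.ext ?_)⟩
  rintro ⟨i, j⟩ ⟨k, l⟩
  simp only [Matrix.add_apply, Matrix.smul_apply, smul_eq_mul, Matrix.one_apply, Prod.mk.injEq,
    swapMatrix_apply, maxEntangled_apply]
  by_cases hpair : (i = k ∧ j = l) ∨ (i = l ∧ j = k) ∨ (i = j ∧ k = l)
  · rcases eq_or_ne i j with rfl | hij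
    · obtain rfl : k = l := by grind
      rcases eq_or_ne i k with rfl | hik
      · have h := hA.apply_perm (Equiv.swap p i) p p p p
        rw [Equiv.swap_apply_left, hA.apply_self_self hpq] at h
        simp [h]
      · obtain ⟨σ, rfl, rfl⟩ := hmove hik
        simp [hA.apply_perm, hpq]
    · obtain ⟨σ, rfl, rfl⟩ := hmove hij
      rcases hpair with ⟨rfl, rfl⟩ | ⟨rfl, rfl⟩ | ⟨h, -⟩
      · simp [hA.apply_perm, hpq]
      · simp [hA.apply_perm, hpq]
      · exact absurd h hij
  · push Not at hpair
    rw [hA.apply_eq_zero (by grind) (by grind) (by grind)]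
    grind

end IsOOInvariant

end OrthogonalInvariance

section OOSpan

variable {n R K : Type*} [Fintype n]

theorem cast_card_sub_one_ne_zero [AddGroupWithOne K] [CharZero K] [Nontrivial n] :
    (Fintype.card n : K) - 1 ≠ 0 :=
  sub_ne_zero.mpr (Nat.cast_ne_one.mpr Fintype.one_lt_card.ne')

theorem cast_card_add_two_ne_zero [AddMonoidWithOne K] [CharZero K] :
    (Fintype.card n : K) + 2 ≠ 0 := by
  exact_mod_cast (Nat.cast_ne_zero (R := K)).mpr (Nat.succ_ne_zero (Fintype.card n + 1))

variable [DecidableEq n]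

theorem swapMatrix_mulVec_vec [CommRing R] (M : Matrix n n R) :
    swapMatrix n R *ᵥ vec M = vec Mᵀ :=
  permMatrix_mulVec _

theorem swapMatrix_mul_self [Semiring R] : swapMatrix n R * swapMatrix n R = 1 := by
  ext p q
  simp [swapMatrix, PEquiv.toMatrix_toPEquiv_mul, PEquiv.toMatrix_apply, Matrix.one_apply]

theorem swapMatrix_mul_maxEntangled [CommRing R] :
    swapMatrix n R * maxEntangled n R = maxEntangled n R := by
  rw [maxEntangled, mul_vecMulVec, swapMatrix_mulVec_vec, transpose_one]

theorem maxEntangled_mul_self [CommRing R] :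
    maxEntangled n R * maxEntangled n R = (Fintype.card n : R) • maxEntangled n R := by
  rw [maxEntangled, vecMulVec_mul_vecMulVec, vec_dotProduct_vec, transpose_one, Matrix.one_mul,
    trace_one, vecMulVec_smul]

theorem trace_maxEntangled [CommRing R] : (maxEntangled n R).trace = Fintype.card n := by
  rw [maxEntangled, trace_vecMulVec, vec_dotProduct_vec, transpose_one, Matrix.one_mul, trace_one]

theorem trace_swapMatrix [CommRing R] : (swapMatrix n R).trace = Fintype.card n := by
  simp only [Matrix.trace, diag_apply, swapMatrix_apply, Fintype.sum_prod_type]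
  simp [ite_and, Finset.card_univ]

variable [Field K] [CharZero K] [Nontrivial n]

theorem eq_zero_of_mem_ooSpan {A : Matrix (n × n) (n × n) K} (hA : A ∈ ooSpan n K)
    (htr : A.trace = 0) (hswap : (swapMatrix n K * A).trace = 0)
    (hent : (maxEntangled n K * A).trace = 0) : A = 0 := by
  obtain ⟨x, y, z, rfl⟩ := Submodule.mem_span_triple.mp hA
  have hcomm : (maxEntangled n K * swapMatrix n K).trace = Fintype.card n := by
    rw [trace_mul_comm, swapMatrix_mul_maxEntangled, trace_maxEntangled]
  simp only [Matrix.mul_add, Matrix.mul_smul, Matrix.mul_one, trace_add, trace_smul, smul_eq_mul,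
    trace_one, trace_swapMatrix, trace_maxEntangled, swapMatrix_mul_self, maxEntangled_mul_self,
    swapMatrix_mul_maxEntangled, hcomm, Fintype.card_prod, Nat.cast_mul] at htr hswap hent
  set d : K := (Fintype.card n : K)
  have hdet : d * (d - 1) * (d + 2) ≠ 0 := mul_ne_zero (mul_ne_zero
    (Nat.cast_ne_zero.mpr Fintype.card_ne_zero) cast_card_sub_one_ne_zero) cast_card_add_two_ne_zero
  have hx : x = 0 := (mul_eq_zero_iff_left hdet).mp <| by
    linear_combination (d + 1) * htr - hswap - hent
  have hy : y = 0 := (mul_eq_zero_iff_left hdet).mp <| by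
    linear_combination (d + 1) * hswap - htr - hent
  have hz : z = 0 := (mul_eq_zero_iff_left hdet).mp <| by
    linear_combination (d + 1) * hent - htr - hswap
  simp [hx, hy, hz]

theorem eq_of_mem_ooSpan {A B : Matrix (n × n) (n × n) K} (hA : A ∈ ooSpan n K)
    (hB : B ∈ ooSpan n K) (htr : A.trace = B.trace)
    (hswap : (swapMatrix n K * A).trace = (swapMatrix n K * B).trace)
    (hent : (maxEntangled n K * A).trace = (maxEntangled n K * B).trace) : A = B :=
  sub_eq_zero.mp <| eq_zero_of_mem_ooSpan (sub_mem hA hB)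
    (by rw [trace_sub, htr, sub_self]) (by rw [Matrix.mul_sub, trace_sub, hswap, sub_self])
    (by rw [Matrix.mul_sub, trace_sub, hent, sub_self])

end OOSpan

section OOState

variable (n : Type*) [Fintype n] [DecidableEq n]

/-- The projector `W₋ = (𝟙 - W) / 2` onto the antisymmetric subspace. -/
noncomputable def antisymmProj : Matrix (n × n) (n × n) ℂ :=
  (2 : ℝ)⁻¹ • (1 - swapMatrix n ℂ)

/-- The normalised maximally entangled state `Φ_d`. -/
noncomputable def maxEntangledState : Matrix (n × n) (n × n) ℂ :=
  (Fintype.card n : ℂ)⁻¹ • maxEntangled n ℂ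

/-- The `OO`-invariant operator of trace one with weight `a` on the antisymmetric subspace and
weight `b` on the maximally entangled state. -/
noncomputable def ooState (a b : ℝ) : Matrix (n × n) (n × n) ℂ :=
  (2 * a / (Fintype.card n * ((Fintype.card n : ℝ) - 1))) • antisymmProj n +
    b • maxEntangledState n +
    ((1 - a - b) / ((Fintype.card n : ℝ) * ((Fintype.card n : ℝ) + 1) / 2 - 1)) •
      (1 - maxEntangledState n - antisymmProj n)

variable {n}

theorem maxEntangledState_apply (p q : n × n) :
    maxEntangledState n p q = if p.1 = p.2 ∧ q.1 = q.2 then (Fintype.card n : ℂ)⁻¹ else 0 := by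
  rw [maxEntangledState, Matrix.smul_apply, maxEntangled_apply, smul_eq_mul, mul_ite, mul_one,
    mul_zero]

theorem ooState_mem_ooSpan (a b : ℝ) : ooState n a b ∈ ooSpan n ℂ := by
  have hone : (1 : Matrix (n × n) (n × n) ℂ) ∈ ooSpan n ℂ := Submodule.subset_span (by simp)
  have hanti : antisymmProj n ∈ ooSpan n ℂ :=
    Submodule.smul_of_tower_mem _ _ (sub_mem hone (Submodule.subset_span (by simp)))
  have hent : maxEntangledState n ∈ ooSpan n ℂ :=
    Submodule.smul_mem _ _ (Submodule.subset_span (by simp))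
  exact add_mem (add_mem (Submodule.smul_of_tower_mem _ _ hanti)
    (Submodule.smul_of_tower_mem _ _ hent))
    (Submodule.smul_of_tower_mem _ _ (sub_mem (sub_mem hone hent) hanti))

theorem trace_mul_ooState (B : Matrix (n × n) (n × n) ℂ) (a b : ℝ) :
    (B * ooState n a b).trace =
      2 * a / (Fintype.card n * (Fintype.card n - 1)) *
        ((B.trace - (B * swapMatrix n ℂ).trace) / 2) +
      b * ((B * maxEntangled n ℂ).trace / Fintype.card n) +
      (1 - a - b) / ((Fintype.card n - 1) * (Fintype.card n + 2) / 2) *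
        (B.trace - (B * maxEntangled n ℂ).trace / Fintype.card n -
          (B.trace - (B * swapMatrix n ℂ).trace) / 2) := by
  have hdim : (Fintype.card n : ℝ) * (Fintype.card n + 1) / 2 - 1 =
      (Fintype.card n - 1) * (Fintype.card n + 2) / 2 := by ring
  simp only [ooState, hdim, antisymmProj, maxEntangledState, Matrix.mul_add, Matrix.mul_sub,
    Matrix.mul_smul, Matrix.mul_one, trace_add, trace_sub, trace_smul, Complex.real_smul,
    smul_eq_mul]
  push_cast
  ring

variable [Nontrivial n] (a b : ℝ)

theorem trace_ooState : (ooState n a b).trace = 1 := by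
  have h : (Fintype.card n : ℂ) ≠ 0 := Nat.cast_ne_zero.mpr Fintype.card_ne_zero
  have h₁ : (Fintype.card n : ℂ) - 1 ≠ 0 := cast_card_sub_one_ne_zero
  have h₂ : (Fintype.card n : ℂ) + 2 ≠ 0 := cast_card_add_two_ne_zero
  rw [← Matrix.one_mul (ooState n a b), trace_mul_ooState]
  simp only [Matrix.one_mul, trace_one, trace_swapMatrix, trace_maxEntangled, Fintype.card_prod,
    Nat.cast_mul]
  field_simp
  ring

theorem trace_swapMatrix_mul_ooState : (swapMatrix n ℂ * ooState n a b).trace = 1 - 2 * a := by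
  have h : (Fintype.card n : ℂ) ≠ 0 := Nat.cast_ne_zero.mpr Fintype.card_ne_zero
  have h₁ : (Fintype.card n : ℂ) - 1 ≠ 0 := cast_card_sub_one_ne_zero
  have h₂ : (Fintype.card n : ℂ) + 2 ≠ 0 := cast_card_add_two_ne_zero
  simp only [trace_mul_ooState, swapMatrix_mul_self, swapMatrix_mul_maxEntangled,
    trace_one, trace_swapMatrix, trace_maxEntangled, Fintype.card_prod, Nat.cast_mul]
  field_simp
  ring

theorem trace_maxEntangled_mul_ooState :
    (maxEntangled n ℂ * ooState n a b).trace = Fintype.card n * b := by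
  have h : (Fintype.card n : ℂ) ≠ 0 := Nat.cast_ne_zero.mpr Fintype.card_ne_zero
  have h₁ : (Fintype.card n : ℂ) - 1 ≠ 0 := cast_card_sub_one_ne_zero
  have h₂ : (Fintype.card n : ℂ) + 2 ≠ 0 := cast_card_add_two_ne_zero
  have hcomm : (maxEntangled n ℂ * swapMatrix n ℂ).trace = Fintype.card n := by
    rw [trace_mul_comm, swapMatrix_mul_maxEntangled, trace_maxEntangled]
  simp only [trace_mul_ooState, maxEntangled_mul_self, trace_smul, hcomm, trace_maxEntangled,
    smul_eq_mul]
  field_simp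
  ring

end OOState

section IsotropicOrbit

variable {n : Type*}

/-- The operator `U ⊗ conj U`. -/
def conjKronecker (U : Matrix n n ℂ) : Matrix (n × n) (n × n) ℂ :=
  U ⊗ₖ U.map (starRingEnd ℂ)

theorem conjKronecker_map_ofReal (V : Matrix n n ℝ) :
    conjKronecker (V.map (algebraMap ℝ ℂ)) = V.map (algebraMap ℝ ℂ) ⊗ₖ V.map (algebraMap ℝ ℂ) := by
  rw [conjKronecker, Matrix.map_map]
  congr 1
  ext i j
  simp

variable [Fintype n]

theorem conjKronecker_mul (U V : Matrix n n ℂ) :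
    conjKronecker (U * V) = conjKronecker U * conjKronecker V := by
  rw [conjKronecker, Matrix.map_mul, mul_kronecker_mul, conjKronecker, conjKronecker]

theorem conjKronecker_mulVec_vec (U X : Matrix n n ℂ) :
    conjKronecker U *ᵥ vec X = vec (U.map (starRingEnd ℂ) * X * Uᵀ) :=
  kronecker_mulVec_vec _ _ _

variable [DecidableEq n]

theorem map_mem_unitaryGroup {R S : Type*} [CommRing R] [StarRing R] [CommRing S] [StarRing S]
    (f : R →+* S) (hf : Function.Semiconj f star star) {U : Matrix n n R}
    (hU : U ∈ unitaryGroup n R) : U.map f ∈ unitaryGroup n S := by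
  rw [mem_unitaryGroup_iff, star_eq_conjTranspose, ← conjTranspose_map f hf, ← Matrix.map_mul,
    ← star_eq_conjTranspose, mem_unitaryGroup_iff.mp hU, Matrix.map_one f f.map_zero f.map_one]

theorem map_ofReal_mem_unitaryGroup {V : Matrix n n ℝ} (hV : V ∈ orthogonalGroup n ℝ) :
    V.map (algebraMap ℝ ℂ) ∈ unitaryGroup n ℂ :=
  map_mem_unitaryGroup _ (fun x => by simp) hV

theorem conjKronecker_mem_unitaryGroup {U : Matrix n n ℂ} (hU : U ∈ unitaryGroup n ℂ) :
    conjKronecker U ∈ unitaryGroup (n × n) ℂ :=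
  kronecker_mem_unitary hU (map_mem_unitaryGroup _ (fun _ => rfl) hU)

/-- The orbit of the pure state `|φ⟩⟨φ|` under conjugation by the operators `U ⊗ conj U`. -/
def isotropicOrbit (φ : n × n → ℂ) : Set (Matrix (n × n) (n × n) ℂ) :=
  {A | ∃ U : unitaryGroup n ℂ,
    A = vecMulVec (conjKronecker (U : Matrix n n ℂ) *ᵥ φ)
      (star (conjKronecker (U : Matrix n n ℂ) *ᵥ φ))}

variable (φ : n × n → ℂ)

theorem isCompact_isotropicOrbit : IsCompact (isotropicOrbit φ) := by
  have hcont : Continuous fun U : Matrix n n ℂ =>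
      vecMulVec (conjKronecker U *ᵥ φ) (star (conjKronecker U *ᵥ φ)) := by
    have : Continuous fun U : Matrix n n ℂ => conjKronecker U :=
      continuous_matrix fun p q => by
        simp only [conjKronecker, kroneckerMap_apply, Matrix.map_apply]
        fun_prop
    fun_prop
  convert isCompact_unitaryGroup.image hcont
  ext A
  simp [isotropicOrbit, eq_comm]

theorem conj_mem_convexHull_isotropicOrbit {U : Matrix n n ℂ} (hU : U ∈ unitaryGroup n ℂ)
    {A : Matrix (n × n) (n × n) ℂ} (hA : A ∈ convexHull ℝ (isotropicOrbit φ)) :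
    conjKronecker U * A * (conjKronecker U)ᴴ ∈ convexHull ℝ (isotropicOrbit φ) := by
  let conj : Matrix (n × n) (n × n) ℂ →ₗ[ℝ] Matrix (n × n) (n × n) ℂ :=
    LinearMap.mulLeftRight ℝ (conjKronecker U, (conjKronecker U)ᴴ)
  refine convexHull_min ?_ ((convex_convexHull ℝ (isotropicOrbit φ)).linear_preimage conj) hA
  rintro _ ⟨V, rfl⟩
  refine subset_convexHull ℝ _ ⟨⟨U, hU⟩ * V, ?_⟩
  simp [conj, conjKronecker_mul, mul_vecMulVec, vecMulVec_mul, star_mulVec, vecMul_vecMul]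

end IsotropicOrbit

section TraceFunctionals

variable {n : Type*} [Fintype n]

theorem trace_vecMulVec_vec (M : Matrix n n ℂ) :
    (vecMulVec (vec M) (star (vec M))).trace = (Mᴴ * M).trace := by
  rw [trace_vecMulVec, dotProduct_comm, star_vec_dotProduct_vec]

variable [DecidableEq n]

theorem trace_swapMatrix_mul_vecMulVec_vec (M : Matrix n n ℂ) :
    (swapMatrix n ℂ * vecMulVec (vec M) (star (vec M))).trace = (Mᴴ * Mᵀ).trace := by
  rw [mul_vecMulVec, swapMatrix_mulVec_vec, trace_vecMulVec, dotProduct_comm,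
    star_vec_dotProduct_vec]

theorem trace_maxEntangled_mul_vecMulVec_vec (M : Matrix n n ℂ) :
    (maxEntangled n ℂ * vecMulVec (vec M) (star (vec M))).trace = star M.trace * M.trace := by
  rw [maxEntangled, vecMulVec_mul_vecMulVec, vec_dotProduct_vec, vecMulVec_smul, trace_smul,
    trace_vecMulVec, dotProduct_comm, star_vec_dotProduct_vec]
  simp [mul_comm]

end TraceFunctionals

section SchmidtVector

variable {n : Type*} [DecidableEq n]

/-- The vector `∑ i, s i • |ii⟩`. -/
noncomputable def schmidtVector (s : n → ℝ) : n × n → ℂ := vec (diagonal fun i => (s i : ℂ))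

theorem schmidtVector_apply (s : n → ℝ) (p : n × n) :
    schmidtVector s p = if p.1 = p.2 then (s p.1 : ℂ) else 0 := by
  rw [schmidtVector, vec, diagonal_apply]
  split_ifs with h₁ h₂ h₂
  · rw [h₁]
  · exact absurd h₁.symm h₂
  · exact absurd h₂.symm h₁
  · rfl

variable [Fintype n]

theorem exists_unitary_transpose_mul_self_eq {S : Matrix n n ℂ} (hsymm : Sᵀ = S) (hherm : Sᴴ = S)
    (hsq : S * S = 1) : ∃ U ∈ unitaryGroup n ℂ, Uᵀ * U = S := by
  have hmul : ∀ α β γ δ : ℂ, (α • 1 + β • S) * (γ • 1 + δ • S) =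
      (α * γ + β * δ) • 1 + (α * δ + β * γ) • S := fun α β γ δ => by
    simp only [Matrix.add_mul, Matrix.mul_add, Matrix.smul_mul, Matrix.mul_smul, Matrix.one_mul,
      Matrix.mul_one, hsq]
    module
  -- This square root of `S` acts as `1` and `I` on the eigenspaces of `S` for `1` and `-1`.
  refine ⟨((1 + Complex.I) / 2) • 1 + ((1 - Complex.I) / 2) • S, ?_, ?_⟩
  · have hdiag : (1 - Complex.I) / 2 * ((1 + Complex.I) / 2) +
        (1 + Complex.I) / 2 * ((1 - Complex.I) / 2) = 1 := by
      linear_combination (-1 / 2) * Complex.I_sq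
    have hoff : (1 - Complex.I) / 2 * ((1 - Complex.I) / 2) +
        (1 + Complex.I) / 2 * ((1 + Complex.I) / 2) = 0 := by
      linear_combination (1 / 2) * Complex.I_sq
    rw [mem_unitaryGroup_iff', star_eq_conjTranspose]
    simp [hherm, hmul, hdiag, hoff, ← sub_eq_add_neg]
  · have hdiag : (1 + Complex.I) / 2 * ((1 + Complex.I) / 2) +
        (1 - Complex.I) / 2 * ((1 - Complex.I) / 2) = 0 := by
      linear_combination (1 / 2) * Complex.I_sq
    have hoff : (1 + Complex.I) / 2 * ((1 - Complex.I) / 2) +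
        (1 - Complex.I) / 2 * ((1 + Complex.I) / 2) = 1 := by
      linear_combination (-1 / 2) * Complex.I_sq
    simp [hsymm, hmul, hdiag, hoff]

theorem trace_unitary_conj {V : Matrix n n ℂ} (hV : V ∈ unitaryGroup n ℂ) (X : Matrix n n ℂ) :
    (V * X * Vᴴ).trace = X.trace := by
  rw [Matrix.trace_mul_comm, ← Matrix.mul_assoc, ← star_eq_conjTranspose,
    mem_unitaryGroup_iff'.mp hV, Matrix.one_mul]

theorem mem_isotropicOrbit_schmidtVector_iff {s : n → ℝ} {A : Matrix (n × n) (n × n) ℂ} :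
    A ∈ isotropicOrbit (schmidtVector s) ↔ ∃ V ∈ unitaryGroup n ℂ,
      A = vecMulVec (vec (V * (diagonal fun i => (s i : ℂ)) * Vᴴ))
        (star (vec (V * (diagonal fun i => (s i : ℂ)) * Vᴴ))) := by
  have hconj : ∀ {U : Matrix n n ℂ}, U ∈ unitaryGroup n ℂ →
      U.map (starRingEnd ℂ) ∈ unitaryGroup n ℂ := map_mem_unitaryGroup _ fun _ => rfl
  have hmap : ∀ U : Matrix n n ℂ, (U.map (starRingEnd ℂ))ᴴ = Uᵀ := fun U => by ext; simp
  constructor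
  · rintro ⟨U, rfl⟩
    refine ⟨_, hconj U.2, ?_⟩
    rw [schmidtVector, conjKronecker_mulVec_vec, hmap]
  · rintro ⟨V, hV, rfl⟩
    refine ⟨⟨_, hconj hV⟩, ?_⟩
    have : (V.map (starRingEnd ℂ)).map (starRingEnd ℂ) = V := by ext; simp
    rw [schmidtVector, conjKronecker_mulVec_vec, this]
    rfl

variable {s : n → ℝ}

theorem conjTranspose_unitary_conj_diagonal (V : Matrix n n ℂ) :
    (V * (diagonal fun i => (s i : ℂ)) * Vᴴ)ᴴ = V * (diagonal fun i => (s i : ℂ)) * Vᴴ := by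
  simp [Matrix.mul_assoc, Pi.star_def]

section

variable {A : Matrix (n × n) (n × n) ℂ} (hA : A ∈ isotropicOrbit (schmidtVector s))
include hA

theorem trace_of_mem_isotropicOrbit_schmidtVector : A.trace = ((∑ i, s i ^ 2 : ℝ) : ℂ) := by
  obtain ⟨V, hV, rfl⟩ := mem_isotropicOrbit_schmidtVector_iff.mp hA
  set D : Matrix n n ℂ := diagonal fun i => (s i : ℂ)
  rw [trace_vecMulVec_vec, conjTranspose_unitary_conj_diagonal]
  calc (V * D * Vᴴ * (V * D * Vᴴ)).trace = (V * D * (Vᴴ * V) * D * Vᴴ).trace := by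
        simp only [Matrix.mul_assoc]
    _ = (V * (D * D) * Vᴴ).trace := by
        rw [← star_eq_conjTranspose, mem_unitaryGroup_iff'.mp hV, Matrix.mul_one,
          Matrix.mul_assoc V]
    _ = _ := by simp [trace_unitary_conj hV, D, trace_diagonal, sq]

theorem trace_maxEntangled_mul_of_mem_isotropicOrbit_schmidtVector :
    (maxEntangled n ℂ * A).trace = (((∑ i, s i) ^ 2 : ℝ) : ℂ) := by
  obtain ⟨V, hV, rfl⟩ := mem_isotropicOrbit_schmidtVector_iff.mp hA
  rw [trace_maxEntangled_mul_vecMulVec_vec, trace_unitary_conj hV, trace_diagonal]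
  simp [sq]

end

theorem permMatrix_mul_diagonal_mul_permMatrix_inv {R : Type*} [Semiring R] (σ : Equiv.Perm n)
    (x : n → R) : σ.permMatrix R * diagonal x * (σ⁻¹).permMatrix R = diagonal (x ∘ σ) := by
  rw [PEquiv.toMatrix_toPEquiv_mul, PEquiv.mul_toMatrix_toPEquiv, submatrix_submatrix]
  exact submatrix_diagonal_equiv x σ

theorem exists_mem_isotropicOrbit_trace_swapMatrix_mul {σ : Equiv.Perm n}
    (hσ : Function.Involutive σ) :
    ∃ A ∈ isotropicOrbit (schmidtVector s),
      (swapMatrix n ℂ * A).trace = ((∑ i, s i * s (σ i) : ℝ) : ℂ) := by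
  set P := σ.permMatrix ℂ with hP
  have hinv : σ⁻¹ = σ := Equiv.ext fun i => Equiv.Perm.inv_eq_iff_eq.mpr (hσ i).symm
  have hherm : Pᴴ = P := by rw [hP, conjTranspose_permMatrix, hinv]
  obtain ⟨V, hV, hVP⟩ : ∃ V ∈ unitaryGroup n ℂ, Vᵀ * V = P :=
    exists_unitary_transpose_mul_self_eq (by rw [hP, transpose_permMatrix, hinv]) hherm
      (by rw [hP, ← permMatrix_mul, mul_eq_one_iff_eq_inv.mpr hinv.symm, permMatrix_one])
  set D : Matrix n n ℂ := diagonal fun i => (s i : ℂ) with hD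
  have hVP' : Vᴴ * Vᴴᵀ = P := by
    rw [← hherm, ← hVP, conjTranspose_mul]; rfl
  refine ⟨_, mem_isotropicOrbit_schmidtVector_iff.mpr ⟨V, hV, rfl⟩, ?_⟩
  rw [trace_swapMatrix_mul_vecMulVec_vec, conjTranspose_unitary_conj_diagonal]
  calc (V * D * Vᴴ * (V * D * Vᴴ)ᵀ).trace = (V * (D * (Vᴴ * Vᴴᵀ) * D * Vᵀ)).trace := by
        simp only [transpose_mul, hD, diagonal_transpose, Matrix.mul_assoc]
    _ = (D * P * D * P).trace := by rw [Matrix.trace_mul_comm, Matrix.mul_assoc, hVP, hVP']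
    _ = (D * diagonal ((fun i => (s i : ℂ)) ∘ σ)).trace := by
        rw [← permMatrix_mul_diagonal_mul_permMatrix_inv, hinv]
        simp only [Matrix.mul_assoc, hP, hD]
    _ = _ := by simp [hD, trace_diagonal]

end SchmidtVector

section ConvexHull

theorem map_eq_of_mem_convexHull {E F : Type*} [AddCommGroup E] [Module ℝ E] [AddCommGroup F]
    [Module ℝ F] (f : E →ₗ[ℝ] F) {s : Set E} {c : F} (hs : ∀ x ∈ s, f x = c) {x : E}
    (hx : x ∈ convexHull ℝ s) : f x = c :=
  convexHull_min (t := f ⁻¹' {c}) hs ((convex_singleton c).linear_preimage f) hx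

theorem exists_mem_convex_map_eq_ofReal {E : Type*} [AddCommGroup E] [Module ℝ E] {K : Set E}
    (hK : Convex ℝ K) (f : E →ₗ[ℝ] ℂ) {x y : E} (hx : x ∈ K) (hy : y ∈ K) {u v t : ℝ}
    (hu : f x = u) (hv : f y = v) (ht : t ∈ Set.Icc u v) : ∃ z ∈ K, f z = t := by
  rw [← segment_eq_Icc (ht.1.trans ht.2)] at ht
  obtain ⟨α, β, hα, hβ, hαβ, rfl⟩ := ht
  exact ⟨α • x + β • y, hK hx hy hα hβ hαβ, by simp [hu, hv]⟩

end ConvexHull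

section Main

variable {n : Type*} [Fintype n] [DecidableEq n]

/-- The real-linear functional `A ↦ tr (B A)`. -/
noncomputable def traceMulLeft (B : Matrix (n × n) (n × n) ℂ) :
    Matrix (n × n) (n × n) ℂ →ₗ[ℝ] ℂ :=
  traceLinearMap (n × n) ℝ ℂ ∘ₗ LinearMap.mulLeft ℝ B

theorem traceMulLeft_apply (B A : Matrix (n × n) (n × n) ℂ) :
    traceMulLeft B A = (B * A).trace := rfl

theorem trace_swapMatrix_mul_conjKronecker_conj {V : Matrix n n ℝ} (hV : V ∈ orthogonalGroup n ℝ)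
    (B : Matrix (n × n) (n × n) ℂ) :
    (swapMatrix n ℂ * (conjKronecker (V.map (algebraMap ℝ ℂ)) * B *
      (conjKronecker (V.map (algebraMap ℝ ℂ)))ᴴ)).trace = (swapMatrix n ℂ * B).trace := by
  have hcomm : Commute (conjKronecker (V.map (algebraMap ℝ ℂ))) (swapMatrix n ℂ) := by
    rw [conjKronecker_map_ofReal]
    exact kronecker_self_commute_swapMatrix _
  rw [← Matrix.mul_assoc, ← Matrix.mul_assoc, ← hcomm.eq, Matrix.mul_assoc _ _ B,
    trace_unitary_conj (conjKronecker_mem_unitaryGroup (map_ofReal_mem_unitaryGroup hV))]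

theorem exists_isOOInvariant_mem_convexHull_isotropicOrbit {φ : n × n → ℂ} {c : ℂ}
    (hc : ∃ A ∈ convexHull ℝ (isotropicOrbit φ), (swapMatrix n ℂ * A).trace = c) :
    ∃ A ∈ convexHull ℝ (isotropicOrbit φ), IsOOInvariant A ∧ (swapMatrix n ℂ * A).trace = c := by
  let K : Set (Matrix (n × n) (n × n) ℂ) :=
    convexHull ℝ (isotropicOrbit φ) ∩ {A | (swapMatrix n ℂ * A).trace = c}
  have hclosed : IsClosed {A : Matrix (n × n) (n × n) ℂ | (swapMatrix n ℂ * A).trace = c} :=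
    isClosed_eq (by fun_prop) continuous_const
  have hcompact : IsCompact K :=
    (isCompact_convexHull_of_finiteDimensional (isCompact_isotropicOrbit φ)).inter_right hclosed
  have hconv : Convex ℝ K := (convex_convexHull ℝ _).inter
    ((convex_singleton c).linear_preimage (traceMulLeft (swapMatrix n ℂ)))
  obtain ⟨A, hA, hcomm⟩ := exists_mem_forall_unitary_commute hcompact hconv hc
  refine ⟨A, hA.1, fun V hV => ?_, hA.2⟩
  have hU := map_ofReal_mem_unitaryGroup hV
  rw [← conjKronecker_map_ofReal]
  refine hcomm _ (conjKronecker_mem_unitaryGroup hU) fun B hB =>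
    ⟨conj_mem_convexHull_isotropicOrbit φ hU hB.1, ?_⟩
  exact (trace_swapMatrix_mul_conjKronecker_conj hV B).trans hB.2

variable [Nontrivial n] {s : n → ℝ} {a b : ℝ}

theorem exists_mem_convexHull_trace_swapMatrix_mul (hs : ∑ i, s i ^ 2 = 1)
    (hsum : (∑ i, s i) ^ 2 = Fintype.card n * b)
    (ha : a ∈ Set.Icc 0 (Fintype.card n * (1 - b) / (2 * ((Fintype.card n : ℝ) - 1)))) :
    ∃ A ∈ convexHull ℝ (isotropicOrbit (schmidtVector s)),
      (swapMatrix n ℂ * A).trace = 1 - 2 * a := by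
  obtain ⟨σ, hσ, hle⟩ := exists_involutive_card_sub_one_mul_sum_mul_le s
  obtain ⟨A, hA, hAσ⟩ := exists_mem_isotropicOrbit_trace_swapMatrix_mul (s := s) hσ
  obtain ⟨B, hB, hB1⟩ := exists_mem_isotropicOrbit_trace_swapMatrix_mul (s := s) (σ := 1)
    fun _ => rfl
  have hcard : 0 < (Fintype.card n : ℝ) - 1 := sub_pos.mpr (Nat.one_lt_cast.mpr Fintype.one_lt_card)
  have hmin : ∑ i, s i * s (σ i) ≤ 1 - 2 * a := by
    have ha' := (le_div_iff₀ (by positivity)).mp ha.2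
    refine le_of_mul_le_mul_left (hle.trans ?_) hcard
    rw [hs, hsum]
    linarith
  have hone : (swapMatrix n ℂ * B).trace = ((1 : ℝ) : ℂ) := by
    rw [hB1, ← hs]
    simp [sq]
  obtain ⟨C, hC, hCtr⟩ := exists_mem_convex_map_eq_ofReal (convex_convexHull ℝ _)
    (traceMulLeft (swapMatrix n ℂ)) (subset_convexHull ℝ _ hA) (subset_convexHull ℝ _ hB)
    hAσ hone ⟨hmin, by linarith [ha.1]⟩
  exact ⟨C, hC, by simpa [traceMulLeft_apply] using hCtr⟩

theorem ooInvariant_mem_convexHull_isoOrbit_general (hs : ∑ i, s i ^ 2 = 1)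
    (hsum : (∑ i, s i) ^ 2 = Fintype.card n * b)
    (ha : a ∈ Set.Icc 0 (Fintype.card n * (1 - b) / (2 * ((Fintype.card n : ℝ) - 1)))) :
    ooState n a b ∈ convexHull ℝ (isotropicOrbit (schmidtVector s)) := by
  obtain ⟨A, hA, hinv, hswap⟩ := exists_isOOInvariant_mem_convexHull_isotropicOrbit
    (exists_mem_convexHull_trace_swapMatrix_mul hs hsum ha)
  have htr : A.trace = 1 := map_eq_of_mem_convexHull (traceLinearMap (n × n) ℝ ℂ)
    (fun B hB => (trace_of_mem_isotropicOrbit_schmidtVector hB).trans (by simp [hs])) hA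
  have hent : (maxEntangled n ℂ * A).trace = Fintype.card n * b :=
    map_eq_of_mem_convexHull (traceMulLeft (maxEntangled n ℂ)) (fun B hB =>
      (trace_maxEntangled_mul_of_mem_isotropicOrbit_schmidtVector hB).trans (by simp [hsum])) hA
  have heq : ooState n a b = A := eq_of_mem_ooSpan (ooState_mem_ooSpan a b) hinv.mem_ooSpan
    (by rw [trace_ooState, htr]) (by rw [trace_swapMatrix_mul_ooState, hswap])
    (by rw [trace_maxEntangled_mul_ooState, hent])
  rwa [heq]

end Main

/-- For `b ∈ [1/d,1]`, a Schmidt vector `λ` of the special two-level form with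
`∑ᵢ √λᵢ = √(db)`, the pure state `φ = ∑ᵢ √λᵢ |ii⟩`, and any `a ∈ [0, d(1−b)/(2(d−1))]`,
the OO-invariant state
`ρ = (2a/(d(d−1)))W₋ + bΦ_d + ((1−a−b)/(d(d+1)/2 − 1))(𝟙 − Φ_d − W₋)` lies in the
convex hull of the isotropic orbit `{ |(U ⊗ conj U)φ⟩⟨(U ⊗ conj U)φ| : U unitary }`. -/
theorem ooInvariant_mem_convexHull_isoOrbit (d : ℕ) (hd : 2 ≤ d)
    (b : ℝ) (hb : b ∈ Set.Icc (1 / (d : ℝ)) 1)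
    (lam : Fin d → ℝ) (hlam : ∀ i, 0 ≤ lam i) (hsum : ∑ i, lam i = 1)
    (hs : ∑ i, Real.sqrt (lam i) = Real.sqrt (d * b))
    (hform : ∃ (k : ℕ), 1 ≤ k ∧ k ≤ d - 1 ∧ ∃ t : ℝ,
      ((∀ i : Fin d, lam i = if (i : ℕ) < k then t else (1 - k * t) / ((d : ℝ) - k)) ∧
        0 ≤ (1 - k * t) / ((d : ℝ) - k) ∧ (1 - k * t) / ((d : ℝ) - k) ≤ t) ∨
      ((∀ i : Fin d, lam i =
          if (i : ℕ) < k then t else if (i : ℕ) = k then 1 - k * t else 0) ∧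
        0 ≤ 1 - k * t ∧ 1 - k * t ≤ t))
    (φ : Fin d × Fin d → ℂ)
    (hφ : φ = fun p => if p.1 = p.2 then ((Real.sqrt (lam p.1) : ℝ) : ℂ) else 0)
    (W : Matrix (Fin d × Fin d) (Fin d × Fin d) ℂ)
    (hW : ∀ p q, W p q = if p.1 = q.2 ∧ p.2 = q.1 then 1 else 0)
    (Wm : Matrix (Fin d × Fin d) (Fin d × Fin d) ℂ)
    (hWm : Wm = (2 : ℝ)⁻¹ • (1 - W))
    (Φ : Matrix (Fin d × Fin d) (Fin d × Fin d) ℂ)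
    (hΦ : ∀ p q, Φ p q = if p.1 = p.2 ∧ q.1 = q.2 then ((d : ℂ))⁻¹ else 0)
    (a : ℝ) (haa : a ∈ Set.Icc (0 : ℝ) ((d : ℝ) * (1 - b) / (2 * ((d : ℝ) - 1)))) :
    (2 * a / (d * ((d : ℝ) - 1))) • Wm + b • Φ
        + ((1 - a - b) / ((d : ℝ) * ((d : ℝ) + 1) / 2 - 1)) • (1 - Φ - Wm) ∈
      convexHull ℝ { A : Matrix (Fin d × Fin d) (Fin d × Fin d) ℂ |
        ∃ U : Matrix.unitaryGroup (Fin d) ℂ,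
          A = Matrix.vecMulVec
            ((Matrix.kroneckerMap (· * ·) (U : Matrix (Fin d) (Fin d) ℂ)
              ((U : Matrix (Fin d) (Fin d) ℂ).map (starRingEnd ℂ))).mulVec φ)
            (star ((Matrix.kroneckerMap (· * ·) (U : Matrix (Fin d) (Fin d) ℂ)
              ((U : Matrix (Fin d) (Fin d) ℂ).map (starRingEnd ℂ))).mulVec φ)) } := by
  have : Nontrivial (Fin d) := Fin.nontrivial_iff_two_le.mpr hd
  have hb0 : 0 ≤ (d : ℝ) * b := mul_nonneg d.cast_nonneg (le_trans (by positivity) hb.1)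
  obtain rfl : φ = schmidtVector fun i => √(lam i) := by
    ext p
    rw [hφ, schmidtVector_apply]
  obtain rfl : W = swapMatrix (Fin d) ℂ := by
    ext p q
    rw [hW, swapMatrix_apply]
  obtain rfl : Φ = maxEntangledState (Fin d) := by
    ext p q
    rw [hΦ, maxEntangledState_apply, Fintype.card_fin]
  have hmem : ooState (Fin d) a b ∈
      convexHull ℝ (isotropicOrbit (schmidtVector fun i => √(lam i))) :=
    ooInvariant_mem_convexHull_isoOrbit_general (by simpa [Real.sq_sqrt, hlam] using hsum)
      (by rw [hs, Real.sq_sqrt hb0, Fintype.card_fin]) (by rwa [Fintype.card_fin])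
  rwa [ooState, Fintype.card_fin, antisymmProj, ← hWm] at hmem
end
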